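/- Fix an integer d ≥ 2, a real α > 1, and ε > 0. There exist constants C > 0 and c > 0 such that for every prime p and every nontrivial irreducible unitary representation π of SL₂(ℤ/pℤ), with probability at least 1 − c·p^{−1/4} over a uniformly chosen tuple S = (g₁, …, g_d) ∈ (SL₂(ℤ/pℤ))^d, the number N(α, π, S) of eigenvalues λ of A_{π,S} (counted with multiplicity) satisfying |λ| > α·2√(2d−1) obeys N(α, π, S) ≤ C·p^{1 − (log_{2d}(α) − ε)/2}. -/

import Mathlib

open MeasureTheory

noncomputable section

abbrev SL (n p : ℕ) := Matrix.SpecialLinearGroup (Fin n) (ZMod p)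

/-- Density of the Kesten–McKay law with parameter `2d`. -/
noncomputable def kmDensity (d : ℕ) (x : ℝ) : ℝ :=
  if x ^ 2 ≤ 4 * (2 * (d : ℝ) - 1) then
    2 * d * Real.sqrt (4 * (2 * (d : ℝ) - 1) - x ^ 2) /
      (2 * Real.pi * ((2 * (d : ℝ)) ^ 2 - x ^ 2))
  else 0

/-- The Kesten–McKay law with parameter `2d`, as a measure on `ℝ`. -/
noncomputable def kestenMcKay (d : ℕ) : Measure ℝ :=
  MeasureTheory.volume.withDensity fun x => ENNReal.ofReal (kmDensity d x)

/-- Discrepancy between two measures on ℝ. -/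
noncomputable def discrepancy (ν μ : Measure ℝ) : ℝ :=
  sSup {r : ℝ | ∃ a b : ℝ, a ≤ b ∧
    r = |(ν (Set.Icc a b)).toReal - (μ (Set.Icc a b)).toReal|}

/-- The element of the free group on `d` generators given by a word of length `m`. -/
def wordProd {d m : ℕ} (w : Fin m → Fin d × Bool) : FreeGroup (Fin d) :=
  (List.ofFn fun j => if (w j).2 then FreeGroup.of (w j).1 else (FreeGroup.of (w j).1)⁻¹).prod

/-- Evaluation of a word of length `m` in `d` letters at a tuple `S`. -/
def wordEval {G : Type*} [Group G] {d m : ℕ} (S : Fin d → G) (w : Fin m → Fin d × Bool) : G :=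
  (List.ofFn fun j => if (w j).2 then S (w j).1 else (S (w j).1)⁻¹).prod

/-- `N(d,m)`: the number of trivial words of length `m` in `d` letters. -/
noncomputable def Ntriv (d m : ℕ) : ℕ :=
  Nat.card {w : Fin m → Fin d × Bool // wordProd w = 1}

/-- `A_{π,S} = Σᵢ (π gᵢ + (π gᵢ)⁻¹)`. -/
noncomputable def Amat {G : Type*} [Group G] {n d : ℕ}
    (π : G →* Matrix.unitaryGroup (Fin n) ℂ) (S : Fin d → G) : Matrix (Fin n) (Fin n) ℂ :=
  ∑ i, ((π (S i) : Matrix (Fin n) (Fin n) ℂ) + ((π (S i))⁻¹ : Matrix (Fin n) (Fin n) ℂ))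

/-- Spectral probability measure of a Hermitian matrix. -/
noncomputable def specMeasure {n : ℕ} (A : Matrix (Fin n) (Fin n) ℂ) : Measure ℝ := by
  classical
  exact if hA : A.IsHermitian then
    (n : ENNReal)⁻¹ • ∑ j : Fin n, Measure.dirac (hA.eigenvalues j) else 0

/-- A unitary representation is irreducible if the only invariant subspaces are `⊥` and `⊤`. -/
def IsIrreducibleRep {G : Type*} [Group G] {n : ℕ}
    (π : G →* Matrix.unitaryGroup (Fin n) ℂ) : Prop :=
  ∀ W : Submodule ℂ (Fin n → ℂ),
    (∀ g : G, ∀ v ∈ W, (π g : Matrix (Fin n) (Fin n) ℂ).mulVec v ∈ W) → W = ⊥ ∨ W = ⊤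

/-- Number of eigenvalues of a Hermitian matrix with `|λ| > t`, with multiplicity. -/
noncomputable def excCount {n : ℕ} (A : Matrix (Fin n) (Fin n) ℂ) (t : ℝ) : ℕ := by
  classical
  exact if hA : A.IsHermitian then
    (Finset.univ.filter fun j : Fin n => t < |hA.eigenvalues j|).card else 0

end

/-!
The argument is the trace method. The number of exceptional eigenvalues is at most
`tr (A ^ (2 * k)) / t ^ (2 * k)`, and `tr (A ^ m)` is the sum of the character values `χ (w(S))`
over all words `w` of length `m`.

Words that are trivial in the free group number at most `(2 * √(2 * d - 1)) ^ m`: with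
`q = √(2 * d - 1)`, the average of `q ^ (-‖γ‖)` over the neighbours of a vertex of the Cayley tree
exceeds the value at that vertex by a factor at most `2 * q / (2 * d)`. Each contributes the degree
of `π`, which is at most `|F| + 1` because each nontrivial character of the upper unipotent subgroup
occurs at most once in `π` (Gelfand's trick), while a vector fixed by that subgroup makes `π` a
constituent of a representation induced from the upper triangular matrices.

If `w` is nontrivial, write `S i = X (i, true) * u(t) * (X (i, false))⁻¹` with `u(t)` unipotent and
`X` random. Unless two of the matrices in `X` agree on the fixed line of `u(t)`, the matrix `w(S)`
is polynomial in `t` with leading coefficient of rank one, hence central for at most `‖w‖` values of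
`t`. So `w(S)` is central with probability `O(1 + ‖w‖) / |F|`, and otherwise `|χ (w(S))| ^ 2` is at
most the order `≤ 2 * |F|` of the centralizer of `w(S)`. Markov's inequality with
`(2 * d) ^ (2 * k)` of size about `√|F|` then bounds the contribution of nontrivial words.
-/

noncomputable section

open scoped MatrixGroups Finset

section IrreducibleRepresentations

variable {G k V : Type*} [Monoid G] [Field k] [AddCommGroup V] [Module k V]

lemma exists_common_eigenvector {ι : Type*} [IsAlgClosed k] [FiniteDimensional k V]
    {f : ι → Module.End k V} (hf : ∀ i j, Commute (f i) (f j))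
    {W₀ : Submodule k V} (hW₀ : W₀ ≠ ⊥) (hinv : ∀ i, W₀ ∈ (f i).invtSubmodule) :
    ∃ v ∈ W₀, v ≠ 0 ∧ ∀ i, ∃ c : k, f i v = c • v := by
  -- In a minimal nonzero invariant subspace, every eigenspace is everything.
  obtain ⟨W, ⟨hle, hne, hW⟩, hmin⟩ := (wellFounded_lt (α := Submodule k V)).has_min
    {W | W ≤ W₀ ∧ W ≠ ⊥ ∧ ∀ i, W ∈ (f i).invtSubmodule} ⟨W₀, le_rfl, hW₀, hinv⟩
  obtain ⟨v, hv, hv0⟩ := W.exists_mem_ne_zero_of_ne_bot hne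
  refine ⟨v, hle hv, hv0, fun i => ?_⟩
  have : Nontrivial W := Submodule.nontrivial_iff_ne_bot.2 hne
  obtain ⟨c, hc⟩ := Module.End.exists_eigenvalue ((f i).restrict (hW i))
  obtain ⟨x, hx⟩ := hc.exists_hasEigenvector
  have hx' : (x : V) ∈ Module.End.eigenspace (f i) c :=
    Module.End.mem_eigenspace_iff.2 (congrArg Subtype.val hx.apply_eq_smul)
  have heigen : W ⊓ Module.End.eigenspace (f i) c = W := by
    refine inf_le_left.eq_of_not_lt (hmin _ ⟨inf_le_left.trans hle, ?_, fun j y hy => ?_⟩)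
    · exact (Submodule.ne_bot_iff _).2 ⟨x, ⟨x.2, hx'⟩, fun h => hx.2 (Subtype.ext h)⟩
    · refine ⟨hW j hy.1, Module.End.mem_eigenspace_iff.2 ?_⟩
      rw [← Module.End.mul_apply, hf i j, Module.End.mul_apply,
        Module.End.mem_eigenspace_iff.1 hy.2, map_smul]
  exact ⟨c, Module.End.mem_eigenspace_iff.1 (heigen.ge hv).2⟩

lemma eq_top_of_isIrreducible (ρ : Representation k G V) [ρ.IsIrreducible] {W : Submodule k V}
    (hW : ∀ g, W ∈ Module.End.invtSubmodule (ρ g)) {v : V} (hv : v ∈ W) (hv0 : v ≠ 0) : W = ⊤ := by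
  rcases eq_bot_or_eq_top (⟨W, fun g => hW g⟩ : Subrepresentation ρ) with h | h
  · have hbot : W = ⊥ := congrArg Subrepresentation.toSubmodule h
    exact absurd ((Submodule.mem_bot k).1 (hbot ▸ hv)) hv0
  · exact congrArg Subrepresentation.toSubmodule h

lemma span_range_apply_eq_top (ρ : Representation k G V)
    [ρ.IsIrreducible] {v : V} (hv : v ≠ 0) :
    Submodule.span k (Set.range fun g => ρ g v) = ⊤ := by
  refine eq_top_of_isIrreducible ρ (fun g => ?_) (Submodule.subset_span ⟨1, by simp⟩) hv
  rw [Module.End.mem_invtSubmodule, ← Submodule.map_le_iff_le_comap, Submodule.map_span_le]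
  rintro _ ⟨h, rfl⟩
  exact Submodule.subset_span ⟨g * h, by simp⟩

lemma finrank_range_le_one_of_commute_compressions [IsAlgClosed k]
    [FiniteDimensional k V] (ρ : Representation k G V) [ρ.IsIrreducible]
    {E : Module.End k V} (hE : IsIdempotentElem E)
    (hcomm : ∀ g h, Commute (E * ρ g * E) (E * ρ h * E)) :
    Module.finrank k (LinearMap.range E) ≤ 1 := by
  rcases eq_or_ne (LinearMap.range E) ⊥ with hbot | hbot
  · rw [hbot, finrank_bot]
    exact zero_le_one
  obtain ⟨v, hvE, hv0, hv⟩ := exists_common_eigenvector hcomm hbot fun g x _ =>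
    (⟨ρ g (E x), rfl⟩ : E (ρ g (E x)) ∈ LinearMap.range E)
  have hEv : E v = v := by
    obtain ⟨y, rfl⟩ := hvE
    exact LinearMap.congr_fun hE.eq y
  have hle : LinearMap.range E ≤ k ∙ v := by
    rw [LinearMap.range_eq_map, ← span_range_apply_eq_top ρ hv0, Submodule.map_span_le]
    rintro _ ⟨g, rfl⟩
    obtain ⟨c, hc⟩ := hv g
    exact Submodule.mem_span_singleton.2 ⟨c, by rw [← hc]; simp [hEv]⟩
  exact (Submodule.finrank_mono hle).trans (finrank_span_singleton hv0).le

end IrreducibleRepresentations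

section CharacterProjections

variable {A B : Type*} [AddCommGroup A] [Fintype A] [Ring B] [Algebra ℂ B]

/-- The projection onto the `χ`-isotypic part of an action `σ` of a finite abelian group. -/
def charProj (σ : AddChar A B) (χ : AddChar A ℂ) : B :=
  (Fintype.card A : ℂ)⁻¹ • ∑ s, χ (-s) • σ s

lemma mul_charProj (σ : AddChar A B) (χ : AddChar A ℂ) (x : A) :
    σ x * charProj σ χ = χ x • charProj σ χ := by
  rw [charProj, mul_smul_comm, smul_comm]
  congr 1
  rw [Finset.mul_sum, Finset.smul_sum]
  refine Fintype.sum_equiv (Equiv.addLeft x) _ _ fun s => ?_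
  rw [mul_smul_comm, ← σ.map_add_eq_mul, smul_smul, ← χ.map_add_eq_mul]
  simp

lemma charProj_mul (σ : AddChar A B) (χ : AddChar A ℂ) (x : A) :
    charProj σ χ * σ x = χ x • charProj σ χ := by
  rw [← mul_charProj, charProj, smul_mul_assoc, mul_smul_comm, Finset.sum_mul, Finset.mul_sum]
  simp only [smul_mul_assoc, mul_smul_comm, ← σ.map_add_eq_mul, add_comm]

lemma sum_smul_mul_charProj (σ : AddChar A B) (χ : AddChar A ℂ) :
    ∑ s, χ (-s) • (σ s * charProj σ χ) = (Fintype.card A : ℂ) • charProj σ χ := by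
  simp [mul_charProj, smul_smul, ← χ.map_add_eq_mul, ← Nat.cast_smul_eq_nsmul ℂ]

lemma isIdempotentElem_charProj (σ : AddChar A B) (χ : AddChar A ℂ) :
    IsIdempotentElem (charProj σ χ) := by
  have hA : (Fintype.card A : ℂ) ≠ 0 := Nat.cast_ne_zero.2 Fintype.card_ne_zero
  rw [IsIdempotentElem]
  nth_rw 1 [charProj]
  simp only [smul_mul_assoc, Finset.sum_mul, sum_smul_mul_charProj, smul_smul]
  rw [inv_mul_cancel₀ hA, one_smul]

lemma sum_charProj (σ : AddChar A B) : ∑ χ, charProj σ χ = 1 := by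
  classical
  have hA : (Fintype.card A : ℂ) ≠ 0 := Nat.cast_ne_zero.2 Fintype.card_ne_zero
  simp_rw [charProj, ← Finset.smul_sum]
  rw [Finset.sum_comm]
  simp_rw [← Finset.sum_smul, AddChar.sum_apply_eq_ite, neg_eq_zero, ite_smul, zero_smul]
  simp [hA]

variable {V : Type*} [AddCommGroup V] [Module ℂ V]

lemma mem_range_charProj {σ : AddChar A (Module.End ℂ V)} {χ : AddChar A ℂ} {v : V} :
    v ∈ LinearMap.range (charProj σ χ) ↔ ∀ s, σ s v = χ s • v := by
  constructor
  · rintro ⟨y, rfl⟩ s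
    exact LinearMap.congr_fun (mul_charProj σ χ s) y
  · intro hv
    have hA : (Fintype.card A : ℂ) ≠ 0 := Nat.cast_ne_zero.2 Fintype.card_ne_zero
    refine ⟨v, ?_⟩
    simp [charProj, hv, smul_smul, ← χ.map_add_eq_mul, ← Nat.cast_smul_eq_nsmul ℂ, hA]

lemma finrank_eq_sum_finrank_range_charProj [FiniteDimensional ℂ V]
    (σ : AddChar A (Module.End ℂ V)) :
    Module.finrank ℂ V = ∑ χ, Module.finrank ℂ (LinearMap.range (charProj σ χ)) := by
  have htrace (χ) : LinearMap.trace ℂ V (charProj σ χ) =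
      Module.finrank ℂ (LinearMap.range (charProj σ χ)) :=
    (LinearMap.IsIdempotentElem.isProj_range _ (isIdempotentElem_charProj σ χ)).trace
  have h := congrArg (LinearMap.trace ℂ V) (sum_charProj σ)
  rw [map_sum, LinearMap.trace_one] at h
  simp_rw [htrace] at h
  exact_mod_cast h.symm

end CharacterProjections

section SpecialLinearGroupTwo

variable {F : Type*} [Field F]

lemma sl_ext {g h : SL(2, F)} (h00 : g 0 0 = h 0 0) (h01 : g 0 1 = h 0 1)
    (h10 : g 1 0 = h 1 0) (h11 : g 1 1 = h 1 1) : g = h := by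
  ext i j
  fin_cases i <;> fin_cases j <;> assumption

lemma sl_det (g : SL(2, F)) : g 0 0 * g 1 1 - g 0 1 * g 1 0 = 1 := by
  rw [← Matrix.det_fin_two, g.det_coe]

lemma sl_mul_apply (g h : SL(2, F)) (i j : Fin 2) :
    (g * h) i j = g i 0 * h 0 j + g i 1 * h 1 j := by
  rw [Matrix.SpecialLinearGroup.coe_mul, Matrix.mul_apply, Fin.sum_univ_two]

/-- The upper unipotent one-parameter subgroup `s ↦ [[1, s], [0, 1]]`, as an additive character so
that composing it with a representation gives an action to which `charProj` applies. -/
def unipotent : AddChar F SL(2, F) where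
  toFun s := ⟨!![1, s; 0, 1], by simp⟩
  map_zero_eq_one' := by apply sl_ext <;> simp
  map_add_eq_mul' s t := Subtype.ext <| by
    change !![1, s + t; 0, 1] = !![1, s; 0, 1] * !![1, t; 0, 1]
    simp [add_comm]

/-- The diagonal torus `a ↦ diag(a, a⁻¹)`. -/
def torus (a : Fˣ) : SL(2, F) := ⟨!![(a : F), 0; 0, (a : F)⁻¹], by simp⟩

/-- The representative `[[0, -1], [1, 0]]` of the nontrivial Weyl element. -/
def weyl : SL(2, F) := ⟨!![0, -1; 1, 0], by simp⟩

/-- The anti-automorphism of `SL₂` that exchanges the two diagonal entries. -/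
def swapDiag (g : SL(2, F)) : SL(2, F) :=
  ⟨!![g 1 1, g 0 1; g 1 0, g 0 0], by
    rw [Matrix.det_fin_two_of]; linear_combination sl_det g⟩

@[simp] lemma coe_unipotent (s : F) : (unipotent s : Matrix (Fin 2) (Fin 2) F) = !![1, s; 0, 1] :=
  rfl

@[simp] lemma coe_torus (a : Fˣ) :
    (torus a : Matrix (Fin 2) (Fin 2) F) = !![(a : F), 0; 0, (a : F)⁻¹] := rfl

@[simp] lemma coe_weyl : ((weyl : SL(2, F)) : Matrix (Fin 2) (Fin 2) F) = !![0, -1; 1, 0] := rfl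

@[simp] lemma coe_swapDiag (g : SL(2, F)) :
    (swapDiag g : Matrix (Fin 2) (Fin 2) F) = !![g 1 1, g 0 1; g 1 0, g 0 0] := rfl

lemma swapDiag_swapDiag (g : SL(2, F)) : swapDiag (swapDiag g) = g := by
  apply sl_ext <;> simp

lemma swapDiag_mul (g h : SL(2, F)) : swapDiag (g * h) = swapDiag h * swapDiag g := by
  apply sl_ext <;> simp [sl_mul_apply] <;> ring

lemma swapDiag_unipotent (s : F) : swapDiag (unipotent s) = unipotent s := by
  apply sl_ext <;> simp

lemma commute_torus (a b : Fˣ) : Commute (torus a) (torus b) := by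
  apply sl_ext <;> simp [sl_mul_apply, mul_comm]

lemma unipotent_mul_torus (s : F) (a : Fˣ) :
    unipotent s * torus a = torus a * unipotent (s * (a : F)⁻¹ ^ 2) := by
  have ha := a.ne_zero
  apply sl_ext <;> simp [sl_mul_apply]
  field_simp

lemma unipotent_mul_of_upper {g : SL(2, F)} (hg : g 1 0 = 0) (x : F) :
    unipotent (x * g 0 0) * g = g * unipotent (x * g 1 1) := by
  apply sl_ext <;> simp [sl_mul_apply, hg]
  ring

lemma exists_eq_torus_mul_unipotent {g : SL(2, F)} (hg : g 1 0 = 0) :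
    ∃ a s, g = torus a * unipotent s := by
  have hdet := sl_det g
  rw [hg, mul_zero, sub_zero] at hdet
  have ha : g 0 0 ≠ 0 := left_ne_zero_of_mul_eq_one hdet
  refine ⟨Units.mk0 _ ha, g 0 1 / g 0 0, ?_⟩
  apply sl_ext <;> simp [sl_mul_apply, hg]
  · field_simp
  · field_simp
    linear_combination hdet

lemma bruhat {g : SL(2, F)} (hg : g 1 0 ≠ 0) :
    g = unipotent (g 0 0 / g 1 0) * (weyl * torus (Units.mk0 _ hg)) *
      unipotent (g 1 1 / g 1 0) := by
  have hdet := sl_det g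
  apply sl_ext <;> simp [sl_mul_apply] <;> field_simp
  linear_combination -hdet

end SpecialLinearGroupTwo

section MultiplicityOne

variable {F B : Type*} [Field F] [Fintype F] [Ring B] [Algebra ℂ B]

/-- The projection onto the `χ`-isotypic part of the upper unipotent subgroup. -/
def unipotentProj (ρ : SL(2, F) →* B) (χ : AddChar F ℂ) : B :=
  charProj (ρ.compAddChar unipotent) χ

/-- The Hecke operator: the compression of `ρ g` to the range of `unipotentProj ρ χ`. -/
def hecke (ρ : SL(2, F) →* B) (χ : AddChar F ℂ) (g : SL(2, F)) : B :=
  unipotentProj ρ χ * ρ g * unipotentProj ρ χ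

lemma hecke_unipotent_mul (ρ : SL(2, F) →* B) (χ : AddChar F ℂ) (x : F) (g : SL(2, F)) :
    hecke ρ χ (unipotent x * g) = χ x • hecke ρ χ g := by
  have h := charProj_mul (ρ.compAddChar unipotent) χ x
  simp only [hecke, unipotentProj, map_mul, ← mul_assoc, MonoidHom.coe_compAddChar,
    Function.comp_apply] at h ⊢
  rw [h, smul_mul_assoc, smul_mul_assoc]

lemma hecke_mul_unipotent (ρ : SL(2, F) →* B) (χ : AddChar F ℂ) (x : F) (g : SL(2, F)) :
    hecke ρ χ (g * unipotent x) = χ x • hecke ρ χ g := by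
  have h := mul_charProj (ρ.compAddChar unipotent) χ x
  simp only [hecke, unipotentProj, map_mul, mul_assoc, MonoidHom.coe_compAddChar,
    Function.comp_apply] at h ⊢
  rw [h, mul_smul_comm, mul_smul_comm]

lemma hecke_eq_zero_of_upper (ρ : SL(2, F) →* B) {χ : AddChar F ℂ} (hχ : χ ≠ 1) {g : SL(2, F)}
    (hg : g 1 0 = 0) (hne : g 0 0 ≠ g 1 1) : hecke ρ χ g = 0 := by
  obtain ⟨x, hx⟩ := AddChar.ne_one_iff.1 hχ
  set y : F := x / (g 0 0 - g 1 1)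
  have hχy : χ (y * g 0 0) ≠ χ (y * g 1 1) := by
    have hy : x + y * g 1 1 = y * g 0 0 := by
      have := sub_ne_zero.2 hne
      simp only [y]; field_simp; ring
    rw [← hy, χ.map_add_eq_mul]
    exact fun h => hx (mul_right_cancel₀ (χ.val_isUnit _).ne_zero (h.trans (one_mul _).symm))
  have h := hecke_unipotent_mul ρ χ (y * g 0 0) g
  rw [unipotent_mul_of_upper hg, hecke_mul_unipotent] at h
  by_contra h0
  exact hχy (smul_left_injective ℂ h0 h.symm)

lemma hecke_swapDiag (ρ : SL(2, F) →* B) {χ : AddChar F ℂ} (hχ : χ ≠ 1) (g : SL(2, F)) :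
    hecke ρ χ (swapDiag g) = hecke ρ χ g := by
  by_cases hg : g 1 0 = 0
  · by_cases hne : g 0 0 = g 1 1
    · congr 1
      apply sl_ext <;> simp [hne]
    · rw [hecke_eq_zero_of_upper ρ hχ hg hne,
        hecke_eq_zero_of_upper ρ hχ (g := swapDiag g) hg (Ne.symm hne)]
  · have h : swapDiag g = unipotent (g 1 1 / g 1 0) * (weyl * torus (Units.mk0 _ hg)) *
      unipotent (g 0 0 / g 1 0) := bruhat (g := swapDiag g) hg
    rw [h, hecke_mul_unipotent, hecke_unipotent_mul, smul_comm, ← hecke_unipotent_mul,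
      ← hecke_mul_unipotent, ← bruhat hg]

lemma hecke_mul_hecke (ρ : SL(2, F) →* B) (χ : AddChar F ℂ) (g h : SL(2, F)) :
    hecke ρ χ g * hecke ρ χ h =
      (Fintype.card F : ℂ)⁻¹ • ∑ s, χ (-s) • hecke ρ χ (g * unipotent s * h) := by
  have hE : unipotentProj ρ χ * unipotentProj ρ χ =
    (Fintype.card F : ℂ)⁻¹ • ∑ s, χ (-s) • ρ (unipotent s) := isIdempotentElem_charProj _ _
  calc hecke ρ χ g * hecke ρ χ h
    _ = unipotentProj ρ χ * ρ g * (unipotentProj ρ χ * unipotentProj ρ χ) * ρ h *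
        unipotentProj ρ χ := by simp only [hecke, mul_assoc]
    _ = _ := by
      simp only [hE, hecke, map_mul, mul_smul_comm, smul_mul_assoc, Finset.mul_sum,
        Finset.sum_mul, mul_assoc]

-- Gelfand's trick: the anti-automorphism `swapDiag` fixes every Hecke operator.
lemma commute_hecke (ρ : SL(2, F) →* B) {χ : AddChar F ℂ} (hχ : χ ≠ 1) (g h : SL(2, F)) :
    Commute (hecke ρ χ g) (hecke ρ χ h) := by
  rw [Commute, SemiconjBy, ← hecke_swapDiag ρ hχ g, ← hecke_swapDiag ρ hχ h, hecke_mul_hecke,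
    hecke_swapDiag ρ hχ g, hecke_swapDiag ρ hχ h, hecke_mul_hecke]
  congr! 3 with s
  rw [← hecke_swapDiag ρ hχ, swapDiag_mul, swapDiag_mul, swapDiag_unipotent, swapDiag_swapDiag,
    swapDiag_swapDiag, mul_assoc]

variable {V : Type*} [AddCommGroup V] [Module ℂ V]

lemma finrank_range_unipotentProj_le_one [FiniteDimensional ℂ V]
    (ρ : Representation ℂ SL(2, F) V) [ρ.IsIrreducible] {χ : AddChar F ℂ} (hχ : χ ≠ 1) :
    Module.finrank ℂ (LinearMap.range (unipotentProj ρ χ)) ≤ 1 :=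
  finrank_range_le_one_of_commute_compressions ρ (isIdempotentElem_charProj _ _)
    (commute_hecke ρ hχ)

lemma mem_range_unipotentProj_one {ρ : Representation ℂ SL(2, F) V} {v : V} :
    v ∈ LinearMap.range (unipotentProj ρ 1) ↔ ∀ s, ρ (unipotent s) v = v := by
  rw [unipotentProj, mem_range_charProj]
  simp

lemma exists_torus_eigenvector [FiniteDimensional ℂ V] {ρ : Representation ℂ SL(2, F) V}
    (h : LinearMap.range (unipotentProj ρ 1) ≠ ⊥) :
    ∃ v ≠ 0, (∀ s, ρ (unipotent s) v = v) ∧ ∀ a, ∃ c : ℂ, ρ (torus a) v = c • v := by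
  obtain ⟨v, hv, hv0, htorus⟩ := exists_common_eigenvector
    (fun a b => (commute_torus a b).map ρ) h fun a x hx => by
      rw [Submodule.mem_comap]
      rw [mem_range_unipotentProj_one] at hx ⊢
      intro s
      rw [← Module.End.mul_apply, ← map_mul, unipotent_mul_torus, map_mul, Module.End.mul_apply, hx]
  exact ⟨v, hv0, mem_range_unipotentProj_one.1 hv, htorus⟩

-- `V` is spanned by `v` and the vectors `ρ (unipotent s * weyl) v`, by the Bruhat decomposition.
lemma finrank_le_of_torus_eigenvector (ρ : Representation ℂ SL(2, F) V) [ρ.IsIrreducible] {v : V}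
    (hv : v ≠ 0) (hunip : ∀ s, ρ (unipotent s) v = v)
    (htorus : ∀ a, ∃ c : ℂ, ρ (torus a) v = c • v) :
    Module.finrank ℂ V ≤ Fintype.card F + 1 := by
  let b : Option F → V := fun o => o.elim v fun s => ρ (unipotent s * weyl) v
  have hspan : Submodule.span ℂ (Set.range b) = ⊤ := by
    rw [eq_top_iff, ← span_range_apply_eq_top ρ hv, Submodule.span_le]
    rintro _ ⟨g, rfl⟩
    by_cases hg : g 1 0 = 0
    · obtain ⟨a, s, rfl⟩ := exists_eq_torus_mul_unipotent hg
      obtain ⟨c, hc⟩ := htorus a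
      simp only [map_mul, Module.End.mul_apply, hunip, hc]
      exact Submodule.smul_mem _ _ (Submodule.subset_span ⟨none, rfl⟩)
    · obtain ⟨c, hc⟩ := htorus (Units.mk0 _ hg)
      have : ρ g v = c • b (some (g 0 0 / g 1 0)) := by
        conv_lhs => rw [bruhat hg]
        simp [b, hunip, hc]
      simp only [this]
      exact Submodule.smul_mem _ _ (Submodule.subset_span ⟨_, rfl⟩)
  have hle := finrank_range_le_card (R := ℂ) b
  rwa [Set.finrank, hspan, finrank_top, Fintype.card_option] at hle

lemma finrank_le_card_add_one [FiniteDimensional ℂ V] (ρ : Representation ℂ SL(2, F) V)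
    [ρ.IsIrreducible] :
    Module.finrank ℂ V ≤ Fintype.card F + 1 := by
  by_cases hbot : LinearMap.range (unipotentProj ρ 1) = ⊥
  · calc Module.finrank ℂ V
      _ = ∑ χ, Module.finrank ℂ (LinearMap.range (unipotentProj ρ χ)) :=
        finrank_eq_sum_finrank_range_charProj _
      _ ≤ ∑ _χ : AddChar F ℂ, 1 := Finset.sum_le_sum fun χ _ => by
        rcases eq_or_ne χ 1 with rfl | hχ
        · rw [hbot, finrank_bot]
          exact zero_le_one
        · exact finrank_range_unipotentProj_le_one ρ hχ
      _ ≤ Fintype.card F + 1 := by simp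
  · obtain ⟨v, hv, hunip, htorus⟩ := exists_torus_eigenvector hbot
    exact finrank_le_of_torus_eigenvector ρ hv hunip htorus

end MultiplicityOne

section UnitaryRepresentations

variable {G ι : Type*} [Group G] [Fintype ι] [DecidableEq ι]

/-- A homomorphism to the unitary group, viewed as a representation on `ι → ℂ`. -/
def unitaryRep (π : G →* Matrix.unitaryGroup ι ℂ) : Representation ℂ G (ι → ℂ) :=
  (Matrix.toLinAlgEquiv' : Matrix ι ι ℂ ≃ₐ[ℂ] _).toMonoidHom.comp
    ((Matrix.unitaryGroup ι ℂ).subtype.comp π)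

lemma character_unitaryRep (π : G →* Matrix.unitaryGroup ι ℂ) (g : G) :
    (unitaryRep π).character g = (π g : Matrix ι ι ℂ).trace :=
  Matrix.trace_toLin'_eq _

lemma isIrreducible_unitaryRep {n : ℕ} [NeZero n] {π : G →* Matrix.unitaryGroup (Fin n) ℂ}
    (hπ : IsIrreducibleRep π) : (unitaryRep π).IsIrreducible where
  exists_pair_ne := ⟨⊥, ⊤, fun h => bot_ne_top (congrArg Subrepresentation.toSubmodule h)⟩
  eq_bot_or_eq_top W := by
    refine (hπ W.toSubmodule fun g v hv => W.apply_mem_toSubmodule g hv).imp ?_ ?_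
    all_goals exact fun h => Subrepresentation.toSubmodule_injective h

lemma sum_norm_trace_sq [Fintype G] (π : G →* Matrix.unitaryGroup ι ℂ)
    [(unitaryRep π).IsIrreducible] :
    ∑ g, ‖(π g : Matrix ι ι ℂ).trace‖ ^ 2 = Nat.card G := by
  have hG : (Nat.card G : ℂ) ≠ 0 := Nat.cast_ne_zero.2 Nat.card_pos.ne'
  have := invertibleOfNonzero hG
  have hnorm (g : G) : (unitaryRep π).character g * (unitaryRep π).character g⁻¹ =
      ((‖(π g : Matrix ι ι ℂ).trace‖ ^ 2 : ℝ) : ℂ) := by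
    rw [character_unitaryRep, character_unitaryRep, map_inv, Matrix.UnitaryGroup.inv_val,
      Matrix.star_eq_conjTranspose, Matrix.trace_conjTranspose, Complex.star_def, Complex.mul_conj']
    push_cast
    rfl
  have h := Representation.char_orthonormal (unitaryRep π) (unitaryRep π)
  rw [if_pos ⟨.refl _⟩, inv_mul_eq_one₀ hG, Finset.sum_congr rfl fun g _ => hnorm g] at h
  exact_mod_cast h.symm

lemma norm_trace_sq_le_card_centralizer [Finite G] (π : G →* Matrix.unitaryGroup ι ℂ)
    [(unitaryRep π).IsIrreducible] (g : G) :
    ‖(π g : Matrix ι ι ℂ).trace‖ ^ 2 ≤ Nat.card (Subgroup.centralizer {g}) := by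
  classical
  have := Fintype.ofFinite G
  set K := (MulAction.orbit (ConjAct G) g).toFinset with hK
  have horbit : K.card * Nat.card (Subgroup.centralizer {g}) = Nat.card G := by
    rw [Subgroup.nat_card_centralizer_nat_card_stabilizer, Nat.card_eq_fintype_card,
      Set.toFinset_card, MulAction.card_orbit_mul_card_stabilizer_eq_card_group,
      Nat.card_eq_fintype_card, ConjAct.card]
  have hclass : ∀ h ∈ K, ‖(π h : Matrix ι ι ℂ).trace‖ = ‖(π g : Matrix ι ι ℂ).trace‖ := by
    intro h hh
    obtain ⟨c, hc⟩ := isConj_iff.1 (ConjAct.mem_orbit_conjAct.1 (Set.mem_toFinset.1 hh))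
    rw [← character_unitaryRep, ← character_unitaryRep, ← hc, Representation.char_conj]
  have hsum : K.card * ‖(π g : Matrix ι ι ℂ).trace‖ ^ 2 ≤ Nat.card G := calc
    _ = ∑ h ∈ K, ‖(π h : Matrix ι ι ℂ).trace‖ ^ 2 := by
      rw [Finset.sum_congr rfl fun h hh => by rw [hclass h hh], Finset.sum_const, nsmul_eq_mul]
    _ ≤ ∑ h, ‖(π h : Matrix ι ι ℂ).trace‖ ^ 2 :=
      Finset.sum_le_univ_sum_of_nonneg fun _ => by positivity
    _ = Nat.card G := sum_norm_trace_sq π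
  have hpos : 0 < K.card := by
    rw [hK, Finset.card_pos, Set.toFinset_nonempty]
    exact MulAction.nonempty_orbit g
  rw [← horbit, Nat.cast_mul] at hsum
  exact le_of_mul_le_mul_left hsum (Nat.cast_pos.2 hpos)

end UnitaryRepresentations

section Centralizers

variable {F : Type*} [Field F]

lemma mem_range_scalar_fin_two {M : Matrix (Fin 2) (Fin 2) F} :
    M ∈ Set.range (Matrix.scalar (Fin 2)) ↔ M 0 1 = 0 ∧ M 1 0 = 0 ∧ M 0 0 = M 1 1 := by
  constructor
  · rintro ⟨r, rfl⟩
    simp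
  · rintro ⟨h01, h10, h⟩
    refine ⟨M 0 0, ?_⟩
    ext i j
    fin_cases i <;> fin_cases j <;> simp [h01, h10, h]

lemma mem_center_iff_mem_range_scalar {g : SL(2, F)} :
    g ∈ Subgroup.center SL(2, F) ↔
      (g : Matrix (Fin 2) (Fin 2) F) ∈ Set.range (Matrix.scalar (Fin 2)) := by
  rw [Matrix.SpecialLinearGroup.mem_center_iff]
  refine ⟨fun ⟨r, _, hr⟩ => ⟨r, hr⟩, fun ⟨r, hr⟩ => ⟨r, ?_, hr⟩⟩
  have hdet := g.det_coe
  rwa [← hr, Matrix.scalar_apply, Matrix.det_diagonal, Finset.prod_const] at hdet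

lemma exists_eq_smul_one_add_smul_of_commute {M N : Matrix (Fin 2) (Fin 2) F}
    (hM : M ∉ Set.range (Matrix.scalar (Fin 2))) (h : Commute M N) :
    ∃ x y : F, N = x • 1 + y • M := by
  have hentry (i j : Fin 2) : M i 0 * N 0 j + M i 1 * N 1 j = N i 0 * M 0 j + N i 1 * M 1 j := by
    simpa only [Matrix.mul_apply, Fin.sum_univ_two] using congrFun (congrFun h.eq i) j
  have h00 := hentry 0 0
  have h01 := hentry 0 1
  have h10 := hentry 1 0
  suffices hy : ∃ y, N 0 1 = y * M 0 1 ∧ N 1 0 = y * M 1 0 ∧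
      N 1 1 - N 0 0 = y * (M 1 1 - M 0 0) by
    obtain ⟨y, hy01, hy10, hy11⟩ := hy
    refine ⟨N 0 0 - y * M 0 0, y, ?_⟩
    ext i j
    fin_cases i <;> fin_cases j <;> simp [hy01, hy10]
    linear_combination hy11
  rw [mem_range_scalar_fin_two] at hM
  by_cases hM01 : M 0 1 = 0
  · by_cases hM10 : M 1 0 = 0
    · have hd : M 1 1 - M 0 0 ≠ 0 := sub_ne_zero.2 fun hd => hM ⟨hM01, hM10, hd.symm⟩
      refine ⟨(N 1 1 - N 0 0) / (M 1 1 - M 0 0), ?_, ?_, by field_simp⟩ <;>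
        apply mul_left_cancel₀ hd <;> simp only [hM01, hM10, mul_zero]
      · linear_combination (N 1 1 - N 0 0) * hM01 - h01
      · linear_combination (N 1 1 - N 0 0) * hM10 + h10
    · refine ⟨N 1 0 / M 1 0, ?_, ?_, ?_⟩ <;> field_simp
      · linear_combination -h00
      · linear_combination -h10
  · refine ⟨N 0 1 / M 0 1, ?_, ?_, ?_⟩ <;> field_simp
    · linear_combination h00
    · linear_combination h01

lemma card_filter_norm_eq_one_le [Fintype F] [DecidableEq F] (t : F) :
    #{z : F × F | z.1 ^ 2 + z.1 * z.2 * t + z.2 ^ 2 = 1} ≤ 2 * Fintype.card F := by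
  refine (Finset.card_le_mul_card_image (f := Prod.snd) _ 2 fun y hy => ?_).trans
    (Nat.mul_le_mul_left 2 (Finset.card_le_univ _))
  obtain ⟨z, hz, rfl⟩ := Finset.mem_image.1 hy
  have hsub : (({z : F × F | z.1 ^ 2 + z.1 * z.2 * t + z.2 ^ 2 = 1} : Finset (F × F)).filter
      fun w => w.2 = z.2) ⊆ {z, (-(z.1 + z.2 * t), z.2)} := by
    intro w hw
    simp only [Finset.mem_filter, Finset.mem_univ, true_and] at hw hz
    obtain ⟨hw, hwz⟩ := hw
    have hprod : (w.1 - z.1) * (w.1 + (z.1 + z.2 * t)) = 0 := by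
      rw [hwz] at hw
      linear_combination hw - hz
    rw [Finset.mem_insert, Finset.mem_singleton, Prod.ext_iff, Prod.ext_iff]
    exact (mul_eq_zero.1 hprod).imp (fun h => ⟨sub_eq_zero.1 h, hwz⟩)
      fun h => ⟨eq_neg_of_add_eq_zero_left h, hwz⟩
  exact (Finset.card_le_card hsub).trans Finset.card_le_two

lemma card_centralizer_le [Fintype F] {g : SL(2, F)} (hg : g ∉ Subgroup.center SL(2, F)) :
    Nat.card (Subgroup.centralizer {g}) ≤ 2 * Fintype.card F := by
  classical
  rw [mem_center_iff_mem_range_scalar] at hg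
  have hspan (h : Subgroup.centralizer {g}) : ∃ x y : F, (h : SL(2, F)).1 = x • 1 + y • g.1 :=
    exists_eq_smul_one_add_smul_of_commute hg <| congrArg Subtype.val <|
      Subgroup.mem_centralizer_singleton_iff.1 h.2 |>.symm
  choose x y hxy using hspan
  have hmem (h : Subgroup.centralizer {g}) :
      x h ^ 2 + x h * y h * (g 0 0 + g 1 1) + y h ^ 2 = 1 := by
    have hdet := sl_det (h : SL(2, F))
    simp only [hxy] at hdet
    simp at hdet
    linear_combination hdet - y h ^ 2 * sl_det g
  have hinj : Function.Injective fun h => (x h, y h) := fun h h' hh => by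
    obtain ⟨hx, hy⟩ : x h = x h' ∧ y h = y h' := Prod.mk.inj hh
    exact Subtype.ext (Subtype.ext (by rw [hxy, hxy h', hx, hy]))
  rw [Nat.card_eq_fintype_card, ← Finset.card_univ, ← Finset.card_image_of_injective _ hinj]
  refine (Finset.card_le_card ?_).trans (card_filter_norm_eq_one_le (g 0 0 + g 1 1))
  exact Finset.image_subset_iff.2 fun h _ => Finset.mem_filter.2 ⟨Finset.mem_univ _, hmem h⟩

lemma norm_trace_le_sqrt_of_notMem_center [Fintype F] {ι : Type*} [Fintype ι] [DecidableEq ι]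
    (π : SL(2, F) →* Matrix.unitaryGroup ι ℂ) [(unitaryRep π).IsIrreducible] {g : SL(2, F)}
    (hg : g ∉ Subgroup.center SL(2, F)) :
    ‖(π g : Matrix ι ι ℂ).trace‖ ≤ √(2 * Fintype.card F) := by
  have := Fintype.ofFinite SL(2, F)
  refine Real.le_sqrt_of_sq_le ((norm_trace_sq_le_card_centralizer π g).trans ?_)
  exact_mod_cast card_centralizer_le hg

end Centralizers

section Words

variable {ι G : Type*} [Group G]

/-- The value at the tuple `S` of a letter `x`, where `(i, true)` stands for the `i`-th generator
and `(i, false)` for its inverse, as in `FreeGroup.mk`. -/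
def letter (S : ι → G) (x : ι × Bool) : G :=
  if x.2 then S x.1 else (S x.1)⁻¹

lemma letter_freeGroup_of (x : ι × Bool) : letter FreeGroup.of x = FreeGroup.mk [x] := by
  obtain ⟨i, _ | _⟩ := x <;> rfl

lemma lift_letter_freeGroup_of (S : ι → G) (x : ι × Bool) :
    FreeGroup.lift S (letter FreeGroup.of x) = letter S x := by
  obtain ⟨i, _ | _⟩ := x <;> simp [letter]

lemma lift_mk_cons (S : ι → G) (x : ι × Bool) (l : List (ι × Bool)) :
    FreeGroup.lift S (.mk (x :: l)) = letter S x * FreeGroup.lift S (.mk l) := by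
  rw [← lift_letter_freeGroup_of, letter_freeGroup_of, ← map_mul, FreeGroup.mul_mk,
    List.singleton_append]

lemma wordEval_cons {d m : ℕ} (S : Fin d → G) (x : Fin d × Bool) (w : Fin m → Fin d × Bool) :
    wordEval S (Fin.cons x w : Fin (m + 1) → Fin d × Bool) = letter S x * wordEval S w := by
  simp [wordEval, letter, List.ofFn_succ]

lemma wordProd_cons {d m : ℕ} (x : Fin d × Bool) (w : Fin m → Fin d × Bool) :
    wordProd (Fin.cons x w : Fin (m + 1) → Fin d × Bool) = letter .of x * wordProd w :=
  wordEval_cons FreeGroup.of x w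

lemma lift_wordProd {d m : ℕ} (S : Fin d → G) (w : Fin m → Fin d × Bool) :
    FreeGroup.lift S (wordProd w) = wordEval S w := by
  induction m with
  | zero => simp [wordProd, wordEval]
  | succ m ih =>
    rw [← Fin.cons_self_tail w, wordProd_cons, map_mul, lift_letter_freeGroup_of, ih, wordEval_cons]

lemma norm_wordProd_le {d m : ℕ} (w : Fin m → Fin d × Bool) : (wordProd w).norm ≤ m := by
  induction m with
  | zero => simp [wordProd]
  | succ m ih =>
    rw [← Fin.cons_self_tail w, wordProd_cons, letter_freeGroup_of]
    exact (FreeGroup.norm_mul_le _ _).trans <|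
      (add_le_add FreeGroup.norm_mk_le (ih _)).trans_eq (add_comm 1 m)

lemma sum_pi_fin_succ {α M : Type*} [Fintype α] [AddCommMonoid M] {m : ℕ}
    (f : (Fin (m + 1) → α) → M) :
    ∑ w, f w = ∑ w : Fin m → α, ∑ x, f (Fin.cons x w : Fin (m + 1) → α) := by
  rw [← (Fin.consEquiv fun _ => α).sum_comp, Fintype.sum_prod_type_right]
  rfl

lemma sum_letter_pow {R : Type*} [Semiring R] {d : ℕ} (f : G →* R) (S : Fin d → G) (m : ℕ) :
    (∑ x, f (letter S x)) ^ m = ∑ w : Fin m → Fin d × Bool, f (wordEval S w) := by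
  induction m with
  | zero => simp [wordEval]
  | succ m ih =>
    rw [sum_pi_fin_succ, pow_succ', ih, Finset.sum_mul_sum, Finset.sum_comm]
    simp only [wordEval_cons, map_mul]

end Words

section TrivialWords

lemma exists_norm_letter_mul_of_ne_one {ι : Type*} [DecidableEq ι] {γ : FreeGroup ι} (hγ : γ ≠ 1) :
    ∃ y, (letter .of y * γ).norm + 1 = γ.norm ∧
      ∀ x ≠ y, (letter .of x * γ).norm = γ.norm + 1 := by
  obtain ⟨⟨i, b⟩, l, hl⟩ := List.exists_cons_of_ne_nil (FreeGroup.toWord_eq_nil_iff.not.2 hγ)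
  have hreduce : FreeGroup.reduce ((i, b) :: l) = (i, b) :: l := by
    rw [← hl, FreeGroup.reduce_toWord]
  have hnorm (x : ι × Bool) : (letter .of x * γ).norm =
      (if x.1 = i ∧ x.2 = !b then l else x :: (i, b) :: l).length := by
    rw [FreeGroup.norm, letter_freeGroup_of, ← FreeGroup.mk_toWord (x := γ), hl, FreeGroup.mul_mk,
      FreeGroup.toWord_mk, List.singleton_append, FreeGroup.reduce.cons, hreduce]
  refine ⟨(i, !b), ?_, fun x hx => ?_⟩
  · rw [hnorm, if_pos ⟨rfl, rfl⟩, FreeGroup.norm, hl, List.length_cons]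
  · rw [hnorm, if_neg fun h => hx (Prod.ext h.1 h.2), FreeGroup.norm, hl, List.length_cons]

lemma sum_inv_pow_norm_letter_mul_le {ι : Type*} [DecidableEq ι] [Fintype ι] {q : ℝ} (hq : 0 < q)
    (hq2 : q ^ 2 = 2 * Fintype.card ι - 1) (γ : FreeGroup ι) :
    ∑ x, q⁻¹ ^ (letter .of x * γ).norm ≤ 2 * q * q⁻¹ ^ γ.norm := by
  have hcard : (Fintype.card (ι × Bool) : ℝ) = q ^ 2 + 1 := by
    rw [Fintype.card_prod, Fintype.card_bool]
    push_cast
    linarith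
  by_cases hγ : γ = 1
  · have hι : (1 : ℝ) ≤ Fintype.card ι := by
      refine Nat.one_le_cast.2 (Nat.one_le_iff_ne_zero.2 fun h => ?_)
      have := pow_pos hq 2
      norm_num [h] at hq2
      linarith
    have hletter (x : ι × Bool) : (letter FreeGroup.of x).norm = 1 := by
      rw [letter_freeGroup_of]
      rfl
    simp only [hγ, mul_one, hletter, pow_one, FreeGroup.norm_one, pow_zero, Finset.sum_const,
      Finset.card_univ, nsmul_eq_mul, hcard]
    rw [← div_eq_mul_inv, div_le_iff₀ hq]
    nlinarith
  · obtain ⟨y, hy, hne⟩ := exists_norm_letter_mul_of_ne_one hγ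
    rw [← Finset.add_sum_erase _ _ (Finset.mem_univ y),
      Finset.sum_congr rfl fun x hx => by rw [hne x (Finset.ne_of_mem_erase hx)], Finset.sum_const,
      Finset.card_erase_of_mem (Finset.mem_univ y), nsmul_eq_mul, Finset.card_univ,
      Nat.cast_pred (Fintype.card_pos_iff.2 ⟨y⟩), hcard, ← hy]
    have hqq : q * q⁻¹ = 1 := mul_inv_cancel₀ hq.ne'
    refine le_of_eq ?_
    linear_combination q⁻¹ ^ (letter .of y * γ).norm * (q * q⁻¹ - 1) * hqq

lemma sum_inv_pow_norm_wordProd_le {d : ℕ} {q : ℝ} (hq : 0 < q) (hq2 : q ^ 2 = 2 * d - 1)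
    (m : ℕ) :
    ∑ w : Fin m → Fin d × Bool, q⁻¹ ^ (wordProd w).norm ≤ (2 * q) ^ m := by
  induction m with
  | zero => simp [wordProd]
  | succ m ih =>
    simp only [sum_pi_fin_succ, wordProd_cons]
    calc ∑ w : Fin m → Fin d × Bool, ∑ x, q⁻¹ ^ (letter .of x * wordProd w).norm
        ≤ ∑ w : Fin m → Fin d × Bool, 2 * q * q⁻¹ ^ (wordProd w).norm :=
          Finset.sum_le_sum fun w _ =>
            sum_inv_pow_norm_letter_mul_le hq (by rwa [Fintype.card_fin]) _
      _ = 2 * q * ∑ w : Fin m → Fin d × Bool, q⁻¹ ^ (wordProd w).norm := by rw [Finset.mul_sum]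
      _ ≤ 2 * q * (2 * q) ^ m := by gcongr
      _ = (2 * q) ^ (m + 1) := (pow_succ' _ _).symm

lemma Ntriv_le {d : ℕ} (hd : 1 ≤ d) (m : ℕ) : (Ntriv d m : ℝ) ≤ (2 * √(2 * d - 1)) ^ m := by
  classical
  have hd' : (1 : ℝ) ≤ d := Nat.one_le_cast.2 hd
  refine le_trans ?_ (sum_inv_pow_norm_wordProd_le (Real.sqrt_pos.2 (by linarith))
    (Real.sq_sqrt (by linarith)) m)
  rw [Ntriv, Nat.card_eq_fintype_card, Fintype.card_subtype, Finset.card_filter, Nat.cast_sum]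
  refine Finset.sum_le_sum fun w _ => ?_
  split_ifs with h
  · simp [h]
  · simp only [Nat.cast_zero]
    positivity

end TrivialWords

section LeadingMatrix

open Polynomial

variable {R n : Type*} [CommRing R] [Fintype n] [DecidableEq n]

/-- The matrix `f t` depends polynomially on `t`, with degree at most `k` and with `L` as the matrix
of coefficients of degree `k`. -/
def HasLeadingMatrix (f : R → Matrix n n R) (k : ℕ) (L : Matrix n n R) : Prop :=
  ∃ P : Matrix n n R[X], (∀ t, f t = (evalRingHom t).mapMatrix P) ∧
    ∀ i j, (P i j).natDegree ≤ k ∧ (P i j).coeff k = L i j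

lemma hasLeadingMatrix_const (A : Matrix n n R) : HasLeadingMatrix (fun _ => A) 0 A := by
  refine ⟨A.map C, fun t => ?_, fun i j => ⟨(natDegree_C _).le, coeff_C_zero⟩⟩
  ext i j
  simp

lemma HasLeadingMatrix.mul {f g : R → Matrix n n R} {k l : ℕ} {L M : Matrix n n R}
    (hf : HasLeadingMatrix f k L) (hg : HasLeadingMatrix g l M) :
    HasLeadingMatrix (fun t => f t * g t) (k + l) (L * M) := by
  obtain ⟨P, hfP, hP⟩ := hf
  obtain ⟨Q, hgQ, hQ⟩ := hg
  refine ⟨P * Q, fun t => by rw [map_mul, ← hfP, ← hgQ], fun i j => ⟨?_, ?_⟩⟩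
  · exact natDegree_sum_le_of_forall_le _ _ fun r _ =>
      natDegree_mul_le_of_le (hP i r).1 (hQ r j).1
  · rw [Matrix.mul_apply, finsetSum_coeff, Matrix.mul_apply]
    refine Finset.sum_congr rfl fun r _ => ?_
    rw [coeff_mul_add_eq_of_natDegree_le (hP i r).1 (hQ r j).1, (hP i r).2, (hQ r j).2]

lemma hasLeadingMatrix_unipotent {F : Type*} [Field F] (a : F) :
    HasLeadingMatrix (fun t => (unipotent (a * t) : Matrix (Fin 2) (Fin 2) F)) 1
      (Matrix.single 0 1 a) := by
  refine ⟨!![1, C a * X; 0, 1], fun t => ?_, fun i j => ?_⟩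
  · ext i j
    fin_cases i <;> fin_cases j <;> simp
  · have hdeg : (C a * X).natDegree ≤ 1 := (natDegree_C_mul_le _ _).trans natDegree_X_le
    fin_cases i <;> fin_cases j <;> simp [coeff_one, hdeg]

lemma HasLeadingMatrix.card_filter_mem_range_scalar_le {F : Type*} [Field F] [Fintype F]
    {f : F → Matrix (Fin 2) (Fin 2) F} {k : ℕ} {L : Matrix (Fin 2) (Fin 2) F}
    (hf : HasLeadingMatrix f k L) (hL : L ∉ Set.range (Matrix.scalar (Fin 2)))
    [DecidablePred fun t => f t ∈ Set.range (Matrix.scalar (Fin 2))] :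
    #{t | f t ∈ Set.range (Matrix.scalar (Fin 2))} ≤ k := by
  obtain ⟨P, hfP, hP⟩ := hf
  have hroots (p : F[X]) (hdeg : p.natDegree ≤ k) (hcoeff : p.coeff k ≠ 0)
      (heval : ∀ t, f t ∈ Set.range (Matrix.scalar (Fin 2)) → p.eval t = 0) :
      #{t | f t ∈ Set.range (Matrix.scalar (Fin 2))} ≤ k := by
    have hp : p ≠ 0 := fun h => hcoeff (by rw [h, coeff_zero])
    refine (card_le_degree_of_subset_roots fun t ht => ?_).trans hdeg
    exact (mem_roots hp).2 (heval t (Finset.mem_filter.1 ht).2)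
  have hentry (t : F) (i j : Fin 2) : (P i j).eval t = f t i j := by
    rw [hfP]
    rfl
  have hscalar (t : F) (ht : f t ∈ Set.range (Matrix.scalar (Fin 2))) :=
    mem_range_scalar_fin_two.1 ht
  rw [mem_range_scalar_fin_two, not_and_or, not_and_or] at hL
  obtain hL | hL | hL := hL
  · exact hroots (P 0 1) (hP 0 1).1 (by rwa [(hP 0 1).2]) fun t ht => by
      rw [hentry, (hscalar t ht).1]
  · exact hroots (P 1 0) (hP 1 0).1 (by rwa [(hP 1 0).2]) fun t ht => by
      rw [hentry, (hscalar t ht).2.1]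
  · refine hroots (P 0 0 - P 1 1) ?_ ?_ fun t ht => ?_
    · exact (natDegree_sub_le_of_le (hP 0 0).1 (hP 1 1).1).trans (max_self k).le
    · rwa [coeff_sub, (hP 0 0).2, (hP 1 1).2, sub_ne_zero]
    · rw [eval_sub, hentry, hentry, (hscalar t ht).2.2, sub_self]

end LeadingMatrix

section GeneralPosition

variable {F ι : Type*} [Field F]

/-- The matrices `X a` send the line fixed by the upper unipotent matrices to distinct lines. -/
def InGeneralPosition {κ : Type*} (X : κ → SL(2, F)) : Prop :=
  ∀ a b, a ≠ b → ((X a)⁻¹ * X b) 1 0 ≠ 0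

/-- The curve of tuples `S i = X (i, true) * unipotent t * (X (i, false))⁻¹`, on which the values of
words are polynomial in `t`. -/
def unipotentTuple (X : ι × Bool → SL(2, F)) (t : F) (i : ι) : SL(2, F) :=
  X (i, true) * unipotent t * (X (i, false))⁻¹

lemma letter_unipotentTuple (X : ι × Bool → SL(2, F)) (t : F) (x : ι × Bool) :
    letter (unipotentTuple X t) x =
      X x * unipotent ((if x.2 then 1 else -1) * t) * (X (x.1, !x.2))⁻¹ := by
  obtain ⟨i, _ | _⟩ := x
  · simp [letter, unipotentTuple, AddChar.map_neg_eq_inv, mul_assoc]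
  · simp [letter, unipotentTuple]

lemma hasLeadingMatrix_letter (X : ι × Bool → SL(2, F)) (x : ι × Bool) :
    HasLeadingMatrix (fun t => (letter (unipotentTuple X t) x).1) 1
      ((X x).1 * Matrix.single 0 1 (if x.2 then 1 else -1) * (X (x.1, !x.2))⁻¹.1) := by
  simp only [letter_unipotentTuple, Matrix.SpecialLinearGroup.coe_mul]
  simpa only [zero_add, add_zero] using
    ((hasLeadingMatrix_const _).mul (hasLeadingMatrix_unipotent _)).mul (hasLeadingMatrix_const _)

-- Consecutive letters contribute `E₀₁ M E₀₁ = M₁₀ E₀₁` with `M = (X a)⁻¹ X b` and `a ≠ b`, so the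
-- leading matrix of a reduced word keeps rank one.
lemma exists_hasLeadingMatrix_lift {X : ι × Bool → SL(2, F)} (hX : InGeneralPosition X)
    (x : ι × Bool) (l : List (ι × Bool)) (hl : FreeGroup.IsReduced (x :: l)) :
    ∃ c ≠ 0, ∃ K : SL(2, F), HasLeadingMatrix
      (fun t => (FreeGroup.lift (unipotentTuple X t) (.mk (x :: l))).1) (l.length + 1)
      ((X x).1 * Matrix.single 0 1 c * K.1) := by
  have hsign (x : ι × Bool) : (if x.2 then 1 else -1 : F) ≠ 0 := by
    split_ifs <;> simp
  induction l generalizing x with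
  | nil =>
    refine ⟨_, hsign x, (X (x.1, !x.2))⁻¹, ?_⟩
    simpa only [lift_mk_cons, ← FreeGroup.one_eq_mk, map_one, mul_one, List.length_nil, zero_add]
      using hasLeadingMatrix_letter X x
  | cons y l ih =>
    obtain ⟨hxy, hyl⟩ := List.isChain_cons_cons.1 hl
    have hne : (x.1, !x.2) ≠ y := by
      rintro rfl
      simp at hxy
    obtain ⟨c, hc, K, hK⟩ := ih y hyl
    refine ⟨_, mul_ne_zero (mul_ne_zero (hsign x) (hX _ _ hne)) hc, K, ?_⟩
    have hmul := (hasLeadingMatrix_letter X x).mul hK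
    simp only [lift_mk_cons _ x, Matrix.SpecialLinearGroup.coe_mul, List.length_cons]
    rw [add_comm] at hmul
    convert hmul using 1
    rw [← Matrix.single_mul_mul_single]
    simp only [mul_assoc]

lemma mul_single_mul_notMem_range_scalar {c : F} (hc : c ≠ 0) (g h : SL(2, F)) :
    g.1 * Matrix.single 0 1 c * h.1 ∉ Set.range (Matrix.scalar (Fin 2)) := by
  have hunit (g : SL(2, F)) : IsUnit g.1 := (Matrix.isUnit_iff_isUnit_det _).2 (by simp)
  rintro ⟨r, hr⟩
  have hr0 : r = 0 := by
    have hdet := congrArg Matrix.det hr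
    simpa [Matrix.det_fin_two (Matrix.single _ _ _)] using hdet
  rw [hr0, map_zero, eq_comm, (hunit h).mul_left_eq_zero, (hunit g).mul_right_eq_zero] at hr
  exact hc (by simpa using congrFun (congrFun hr 0) 1)

lemma card_filter_lift_unipotentTuple_mem_center_le [Fintype F] [DecidableEq ι]
    {X : ι × Bool → SL(2, F)} (hX : InGeneralPosition X) {γ : FreeGroup ι} (hγ : γ ≠ 1)
    [DecidablePred (· ∈ Subgroup.center SL(2, F))] :
    #{t | FreeGroup.lift (unipotentTuple X t) γ ∈ Subgroup.center SL(2, F)} ≤ γ.norm := by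
  classical
  obtain ⟨x, l, hl⟩ := List.exists_cons_of_ne_nil (FreeGroup.toWord_eq_nil_iff.not.2 hγ)
  obtain ⟨c, hc, K, hK⟩ :=
    exists_hasLeadingMatrix_lift hX x l (hl ▸ FreeGroup.isReduced_toWord)
  simp only [mem_center_iff_mem_range_scalar]
  rw [← hl, FreeGroup.mk_toWord, ← List.length_cons (a := x), ← hl] at hK
  exact hK.card_filter_mem_range_scalar_le (mul_single_mul_notMem_range_scalar hc _ _)

end GeneralPosition

section CentralValues

variable {F : Type*} [Field F]

lemma eq_of_mul_weyl_mul_unipotent_eq {g h : SL(2, F)} (hg : g 1 0 = 0) (hh : h 1 0 = 0) {s t : F}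
    (heq : g * (weyl * unipotent s) = h * (weyl * unipotent t)) : s = t := by
  have h10 : g 1 1 = h 1 1 := by
    simpa [sl_mul_apply, hg, hh] using congrFun (congrFun (congrArg Subtype.val heq) 1) 0
  have h11 : g 1 1 * s = h 1 1 * t := by
    simpa [sl_mul_apply, hg, hh] using congrFun (congrFun (congrArg Subtype.val heq) 1) 1
  have hg11 : g 1 1 ≠ 0 := fun h0 => by simpa [hg, h0] using sl_det g
  rw [← h10] at h11
  exact mul_left_cancel₀ hg11 h11

variable {κ : Type*} [Fintype F] [Fintype κ] [DecidableEq κ] [DecidableEq F]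

lemma card_filter_inv_mul_upper_mul_card_le {a b : κ} (hab : a ≠ b) :
    #{X : κ → SL(2, F) | ((X a)⁻¹ * X b) 1 0 = 0} * Fintype.card F ≤
      Fintype.card (κ → SL(2, F)) := by
  rw [← Finset.card_univ (α := F), ← Finset.card_product, ← Finset.card_univ]
  refine Finset.card_le_card_of_injOn
    (fun y => Function.update y.1 b (y.1 b * (weyl * unipotent y.2))) (fun _ _ => by simp) ?_
  rintro ⟨X, s⟩ hX ⟨Y, t⟩ hY hXY
  have hXu : ((X a)⁻¹ * X b) 1 0 = 0 := (Finset.mem_filter.1 (Finset.mem_product.1 hX).1).2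
  have hYu : ((Y a)⁻¹ * Y b) 1 0 = 0 := (Finset.mem_filter.1 (Finset.mem_product.1 hY).1).2
  have hne (c : κ) (hc : c ≠ b) : X c = Y c := by
    simpa only [Function.update_of_ne hc] using congrFun hXY c
  have hb : X b * (weyl * unipotent s) = Y b * (weyl * unipotent t) := by
    simpa only [Function.update_self] using congrFun hXY b
  have hst : s = t := eq_of_mul_weyl_mul_unipotent_eq hXu hYu <| by
    rw [mul_assoc, hb, hne a hab, mul_assoc]
  subst hst
  refine Prod.ext (funext fun c => ?_) rfl
  obtain rfl | hc := eq_or_ne c b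
  · exact mul_right_cancel hb
  · exact hne c hc

lemma card_filter_not_inGeneralPosition_mul_card_le
    [DecidablePred (InGeneralPosition : (κ → SL(2, F)) → Prop)] :
    #{X : κ → SL(2, F) | ¬ InGeneralPosition X} * Fintype.card F ≤
      Fintype.card κ ^ 2 * Fintype.card (κ → SL(2, F)) := by
  have hsub : ({X | ¬ InGeneralPosition X} : Finset (κ → SL(2, F))) ⊆
      (Finset.univ : Finset κ).offDiag.biUnion fun c => {X | ((X c.1)⁻¹ * X c.2) 1 0 = 0} := by
    intro X hX
    have hX := (Finset.mem_filter.1 hX).2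
    simp only [InGeneralPosition, not_forall, not_not] at hX
    obtain ⟨a, b, hab, h⟩ := hX
    exact Finset.mem_biUnion.2 ⟨(a, b), by simpa using hab, Finset.mem_filter.2 ⟨by simp, h⟩⟩
  calc #{X : κ → SL(2, F) | ¬ InGeneralPosition X} * Fintype.card F
      ≤ (∑ c ∈ (Finset.univ : Finset κ).offDiag,
          #{X : κ → SL(2, F) | ((X c.1)⁻¹ * X c.2) 1 0 = 0}) * Fintype.card F :=
        Nat.mul_le_mul_right _ ((Finset.card_le_card hsub).trans Finset.card_biUnion_le)
    _ ≤ ∑ _c ∈ (Finset.univ : Finset κ).offDiag, Fintype.card (κ → SL(2, F)) := by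
        rw [Finset.sum_mul]
        exact Finset.sum_le_sum fun c hc =>
          card_filter_inv_mul_upper_mul_card_le (Finset.mem_offDiag.1 hc).2.2
    _ ≤ Fintype.card κ ^ 2 * Fintype.card (κ → SL(2, F)) := by
        rw [Finset.sum_const, smul_eq_mul, Finset.offDiag_card, Finset.card_univ, sq]
        exact Nat.mul_le_mul_right _ (Nat.sub_le _ _)

lemma sum_mul_mul_inv {ι G M : Type*} [Fintype ι] [DecidableEq ι] [Group G] [Fintype G]
    [AddCommMonoid M] (g : G) (f : (ι → G) → M) :
    ∑ X : ι × Bool → G, f (fun i => X (i, true) * g * (X (i, false))⁻¹) =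
      Fintype.card (ι → G) • ∑ S, f S := by
  let e : (ι × Bool → G) ≃ (ι → G) × (ι → G) :=
    { toFun X := (fun i => X (i, true) * g * (X (i, false))⁻¹, fun i => X (i, false))
      invFun Y x := if x.2 then Y.1 x.1 * Y.2 x.1 * g⁻¹ else Y.2 x.1
      left_inv X := by
        ext ⟨i, _ | _⟩ <;> simp
      right_inv Y := by simp }
  refine (Fintype.sum_equiv e _ (fun Y => f Y.1) fun _ => rfl).trans ?_
  simp only [Fintype.sum_prod_type_right, Finset.sum_const, Finset.card_univ]

lemma card_filter_lift_mem_center_mul_card_le {ι : Type*} [Fintype ι] [DecidableEq ι]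
    [DecidablePred (· ∈ Subgroup.center SL(2, F))] {γ : FreeGroup ι} (hγ : γ ≠ 1) :
    #{S : ι → SL(2, F) | FreeGroup.lift S γ ∈ Subgroup.center SL(2, F)} * Fintype.card F ≤
      ((2 * Fintype.card ι) ^ 2 + γ.norm) * Fintype.card (ι → SL(2, F)) := by
  classical
  set q := Fintype.card F
  set K := Fintype.card (ι → SL(2, F))
  let f (S : ι → SL(2, F)) : ℕ := if FreeGroup.lift S γ ∈ Subgroup.center SL(2, F) then 1 else 0
  have hK : Fintype.card (ι × Bool → SL(2, F)) = K * K := by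
    simpa only [Finset.sum_const, Finset.card_univ, smul_eq_mul, mul_one] using
      sum_mul_mul_inv (ι := ι) (1 : SL(2, F)) fun _ => (1 : ℕ)
  have hsum : K * ((∑ S, f S) * q) = ∑ X, ∑ t, f (unipotentTuple X t) := by
    have hrow (t : F) : ∑ X, f (unipotentTuple X t) = K * ∑ S, f S :=
      sum_mul_mul_inv (unipotent t) f
    rw [Finset.sum_comm, Finset.sum_congr rfl fun t _ => hrow t, Finset.sum_const,
      Finset.card_univ, smul_eq_mul]
    ring
  have hcurve (X : ι × Bool → SL(2, F)) :
      ∑ t, f (unipotentTuple X t) ≤ γ.norm + if ¬ InGeneralPosition X then q else 0 := by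
    rw [Finset.sum_boole, Nat.cast_id]
    split_ifs with hX
    · exact card_filter_lift_unipotentTuple_mem_center_le hX hγ
    · exact (Finset.card_le_univ _).trans (Nat.le_add_left _ _)
  have hbad := card_filter_not_inGeneralPosition_mul_card_le (F := F) (κ := ι × Bool)
  rw [Fintype.card_prod, Fintype.card_bool, mul_comm _ 2, hK] at hbad
  rw [Finset.card_filter]
  refine Nat.le_of_mul_le_mul_left ?_ (Fintype.card_pos : 0 < K)
  calc K * ((∑ S, f S) * q)
      ≤ ∑ X, (γ.norm + if ¬ InGeneralPosition X then q else 0) := by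
        rw [hsum]
        exact Finset.sum_le_sum fun X _ => hcurve X
    _ = K * K * γ.norm + #{X : ι × Bool → SL(2, F) | ¬ InGeneralPosition X} * q := by
        rw [Finset.sum_add_distrib, Finset.sum_const, Finset.card_univ, hK, smul_eq_mul,
          ← Finset.sum_filter, Finset.sum_const, smul_eq_mul]
    _ ≤ K * K * γ.norm + (2 * Fintype.card ι) ^ 2 * (K * K) := Nat.add_le_add_left hbad _
    _ = K * (((2 * Fintype.card ι) ^ 2 + γ.norm) * K) := by ring

end CentralValues

section TraceMethod

variable {G : Type*} [Group G] {n d : ℕ}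

lemma Amat_eq_sum_letter (π : G →* Matrix.unitaryGroup (Fin n) ℂ) (S : Fin d → G) :
    Amat π S = ∑ x, (Matrix.unitaryGroup (Fin n) ℂ).subtype.comp π (letter S x) := by
  have hinv (g : G) : ((π g : Matrix (Fin n) (Fin n) ℂ))⁻¹ = (π g⁻¹ : Matrix (Fin n) (Fin n) ℂ) :=
    Matrix.inv_eq_right_inv <| by rw [← Submonoid.coe_mul, ← map_mul]; simp
  simp [Amat, Fintype.sum_prod_type, letter, hinv]

lemma isHermitian_Amat (π : G →* Matrix.unitaryGroup (Fin n) ℂ) (S : Fin d → G) :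
    (Amat π S).IsHermitian := by
  simp [Amat_eq_sum_letter, Matrix.IsHermitian, Matrix.conjTranspose_sum, Fintype.sum_prod_type,
    letter, Matrix.star_eq_conjTranspose, add_comm]

lemma trace_Amat_pow (π : G →* Matrix.unitaryGroup (Fin n) ℂ) (S : Fin d → G) (m : ℕ) :
    (Amat π S ^ m).trace =
      ∑ w : Fin m → Fin d × Bool, (π (wordEval S w) : Matrix (Fin n) (Fin n) ℂ).trace := by
  rw [Amat_eq_sum_letter, sum_letter_pow, Matrix.trace_sum]
  rfl

lemma norm_trace_unitary_le (U : Matrix.unitaryGroup (Fin n) ℂ) :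
    ‖(U : Matrix (Fin n) (Fin n) ℂ).trace‖ ≤ n :=
  calc ‖(U : Matrix (Fin n) (Fin n) ℂ).trace‖
      ≤ ∑ i, ‖(U : Matrix (Fin n) (Fin n) ℂ) i i‖ := norm_sum_le _ _
    _ ≤ ∑ _i : Fin n, 1 := Finset.sum_le_sum fun i _ => entry_norm_bound_of_unitary U.2 i i
    _ = n := by simp

lemma trace_pow_eq_sum_eigenvalues_pow {A : Matrix (Fin n) (Fin n) ℂ} (hA : A.IsHermitian)
    (m : ℕ) : (A ^ m).trace = ((∑ i, hA.eigenvalues i ^ m : ℝ) : ℂ) := by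
  conv_lhs => rw [hA.spectral_theorem, ← map_pow, Matrix.diagonal_pow]
  rw [Unitary.conjStarAlgAut_apply, Matrix.trace_mul_comm, ← mul_assoc]
  simp [Matrix.trace_diagonal]

lemma excCount_mul_pow_le_norm_trace_pow {A : Matrix (Fin n) (Fin n) ℂ} (hA : A.IsHermitian)
    {t : ℝ} (ht : 0 ≤ t) {m : ℕ} (hm : Even m) : excCount A t * t ^ m ≤ ‖(A ^ m).trace‖ := by
  classical
  have hcount : excCount A t = #{j | t < |hA.eigenvalues j|} := by
    simp only [excCount, dif_pos hA]
  calc (excCount A t : ℝ) * t ^ m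
      = ∑ j with t < |hA.eigenvalues j|, t ^ m := by
        rw [hcount, Finset.sum_const, nsmul_eq_mul]
    _ ≤ ∑ j with t < |hA.eigenvalues j|, hA.eigenvalues j ^ m := by
        refine Finset.sum_le_sum fun j hj => ?_
        rw [← hm.pow_abs (hA.eigenvalues j)]
        exact pow_le_pow_left₀ ht (Finset.mem_filter.1 hj).2.le m
    _ ≤ ∑ j, hA.eigenvalues j ^ m :=
        Finset.sum_le_sum_of_subset_of_nonneg (Finset.filter_subset _ _) fun j _ _ =>
          hm.pow_nonneg _
    _ ≤ ‖(A ^ m).trace‖ := by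
        rw [trace_pow_eq_sum_eigenvalues_pow hA, Complex.norm_real]
        exact le_abs_self _

/-- The part of the trace of `Amat π S ^ m` that comes from the words of length `m` which do not
reduce to the identity of the free group; the remaining words do not depend on `S`. -/
def nontrivialWordTrace (π : G →* Matrix.unitaryGroup (Fin n) ℂ) (m : ℕ) (S : Fin d → G) : ℂ :=
  ∑ w : Fin m → Fin d × Bool with wordProd w ≠ 1,
    (π (wordEval S w) : Matrix (Fin n) (Fin n) ℂ).trace

lemma norm_trace_Amat_pow_le (hd : 1 ≤ d) (π : G →* Matrix.unitaryGroup (Fin n) ℂ) (m : ℕ)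
    (S : Fin d → G) : ‖(Amat π S ^ m).trace‖ ≤
      n * (2 * √(2 * d - 1)) ^ m + ‖nontrivialWordTrace π m S‖ := by
  have htriv : ‖∑ w : Fin m → Fin d × Bool with wordProd w = 1,
      (π (wordEval S w) : Matrix (Fin n) (Fin n) ℂ).trace‖ ≤ n * (2 * √(2 * d - 1)) ^ m :=
    calc _ ≤ ∑ w : Fin m → Fin d × Bool with wordProd w = 1, (n : ℝ) :=
          norm_sum_le_of_le _ fun w _ => norm_trace_unitary_le _
      _ = n * Ntriv d m := by
          rw [Finset.sum_const, nsmul_eq_mul, mul_comm, Ntriv, Nat.card_eq_fintype_card,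
            Fintype.card_subtype]
      _ ≤ n * (2 * √(2 * d - 1)) ^ m := by gcongr; exact Ntriv_le hd m
  rw [trace_Amat_pow, ← Finset.sum_filter_add_sum_filter_not Finset.univ (wordProd · = 1)]
  exact (norm_add_le _ _).trans (add_le_add_left htriv _)

lemma excCount_mul_pow_le (hd : 1 ≤ d) (π : G →* Matrix.unitaryGroup (Fin n) ℂ) {m : ℕ}
    (hm : Even m) {S : Fin d → G} {α : ℝ} (hα : 0 ≤ α) {x : ℝ}
    (hS : ‖nontrivialWordTrace π m S‖ ≤ x * (2 * √(2 * d - 1)) ^ m) :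
    excCount (Amat π S) (α * (2 * √(2 * d - 1))) * α ^ m ≤ n + x := by
  have hd' : (1 : ℝ) ≤ d := by exact_mod_cast hd
  have hpos : 0 < 2 * √(2 * d - 1 : ℝ) := mul_pos two_pos (Real.sqrt_pos.2 (by linarith))
  refine le_of_mul_le_mul_right ?_ (pow_pos hpos m)
  calc excCount (Amat π S) (α * (2 * √(2 * d - 1))) * α ^ m * (2 * √(2 * d - 1)) ^ m
      = excCount (Amat π S) (α * (2 * √(2 * d - 1))) * (α * (2 * √(2 * d - 1))) ^ m := by
        rw [mul_pow α, mul_assoc]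
    _ ≤ n * (2 * √(2 * d - 1)) ^ m + ‖nontrivialWordTrace π m S‖ :=
        (excCount_mul_pow_le_norm_trace_pow (isHermitian_Amat π S) (by positivity) hm).trans
          (norm_trace_Amat_pow_le hd π m S)
    _ ≤ (n + x) * (2 * √(2 * d - 1)) ^ m := by
        rw [add_mul]
        exact add_le_add_right hS _

end TraceMethod

section Averages

variable {F : Type*} [Field F] [Fintype F] {n d : ℕ}
  {π : SL(2, F) →* Matrix.unitaryGroup (Fin n) ℂ}

lemma IsIrreducibleRep.le_two_mul_card (hπ : IsIrreducibleRep π) : n ≤ 2 * Fintype.card F := by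
  obtain rfl | hn := eq_or_ne n 0
  · exact Nat.zero_le _
  have : NeZero n := ⟨hn⟩
  have := isIrreducible_unitaryRep hπ
  have hdim : n ≤ Fintype.card F + 1 := by simpa using finrank_le_card_add_one (unitaryRep π)
  have : 1 < Fintype.card F := Fintype.one_lt_card
  omega

lemma IsIrreducibleRep.norm_trace_le_sqrt (hπ : IsIrreducibleRep π) {g : SL(2, F)}
    (hg : g ∉ Subgroup.center SL(2, F)) :
    ‖(π g : Matrix (Fin n) (Fin n) ℂ).trace‖ ≤ √(2 * Fintype.card F) := by
  obtain rfl | hn := eq_or_ne n 0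
  · simp
  have : NeZero n := ⟨hn⟩
  have := isIrreducible_unitaryRep hπ
  exact norm_trace_le_sqrt_of_notMem_center π hg

variable [DecidableEq F]

lemma IsIrreducibleRep.sum_norm_trace_lift_le (hπ : IsIrreducibleRep π)
    {γ : FreeGroup (Fin d)} (hγ : γ ≠ 1) :
    ∑ S : Fin d → SL(2, F), ‖(π (FreeGroup.lift S γ) : Matrix (Fin n) (Fin n) ℂ).trace‖ ≤
      Fintype.card (Fin d → SL(2, F)) *
        (2 * ((2 * d) ^ 2 + γ.norm) + √(2 * Fintype.card F)) := by
  classical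
  set q := Fintype.card F
  set K := Fintype.card (Fin d → SL(2, F))
  set N := #{S : Fin d → SL(2, F) | FreeGroup.lift S γ ∈ Subgroup.center SL(2, F)}
  have hn : (n : ℝ) ≤ 2 * q := by exact_mod_cast hπ.le_two_mul_card
  have hN : (N : ℝ) * q ≤ ((2 * d) ^ 2 + γ.norm) * K := by
    have := card_filter_lift_mem_center_mul_card_le (F := F) hγ
    rw [Fintype.card_fin] at this
    exact_mod_cast this
  calc _ ≤ ∑ S : Fin d → SL(2, F),
        ((if FreeGroup.lift S γ ∈ Subgroup.center SL(2, F) then (n : ℝ) else 0) + √(2 * q)) := by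
        refine Finset.sum_le_sum fun S _ => ?_
        split_ifs with hS
        · exact (norm_trace_unitary_le _).trans (le_add_of_nonneg_right (Real.sqrt_nonneg _))
        · exact (hπ.norm_trace_le_sqrt hS).trans (zero_add _).ge
    _ = N * n + K * √(2 * q) := by
        rw [Finset.sum_add_distrib, ← Finset.sum_filter, Finset.sum_const, Finset.sum_const,
          nsmul_eq_mul, nsmul_eq_mul, Finset.card_univ]
    _ ≤ N * (2 * q) + K * √(2 * q) := by gcongr
    _ ≤ K * (2 * ((2 * d) ^ 2 + γ.norm) + √(2 * q)) := by linarith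

lemma IsIrreducibleRep.sum_norm_nontrivialWordTrace_le (hπ : IsIrreducibleRep π) (m : ℕ) :
    ∑ S : Fin d → SL(2, F), ‖nontrivialWordTrace π m S‖ ≤
      (2 * d) ^ m * (Fintype.card (Fin d → SL(2, F)) *
        (2 * ((2 * d) ^ 2 + m) + √(2 * Fintype.card F))) := by
  set B : ℝ := Fintype.card (Fin d → SL(2, F)) *
    (2 * ((2 * d) ^ 2 + m) + √(2 * Fintype.card F)) with hB
  have hword (w : Fin m → Fin d × Bool) (hw : wordProd w ≠ 1) :
      ∑ S : Fin d → SL(2, F), ‖(π (wordEval S w) : Matrix (Fin n) (Fin n) ℂ).trace‖ ≤ B := by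
    simp only [← lift_wordProd]
    refine (hπ.sum_norm_trace_lift_le hw).trans ?_
    rw [hB]
    gcongr
    exact norm_wordProd_le w
  calc _ ≤ ∑ S : Fin d → SL(2, F), ∑ w : Fin m → Fin d × Bool with wordProd w ≠ 1,
          ‖(π (wordEval S w) : Matrix (Fin n) (Fin n) ℂ).trace‖ :=
        Finset.sum_le_sum fun S _ => norm_sum_le _ _
    _ ≤ ∑ w : Fin m → Fin d × Bool with wordProd w ≠ 1, B := by
        rw [Finset.sum_comm]
        exact Finset.sum_le_sum fun w hw => hword w (Finset.mem_filter.1 hw).2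
    _ ≤ ∑ _w : Fin m → Fin d × Bool, B :=
        Finset.sum_le_sum_of_subset_of_nonneg (Finset.filter_subset _ _) fun _ _ _ => by positivity
    _ = (2 * d) ^ m * B := by
        simp [mul_comm]

end Averages

section Parameters

lemma exists_pow_le_sqrt_le_pow {b q : ℕ} (hb : 1 < b) (hq : q ≠ 0) :
    ∃ k : ℕ, (b : ℝ) ^ (2 * k) ≤ √q ∧ √q ≤ (b : ℝ) ^ (2 * (k + 1)) := by
  have hpow (j : ℕ) : ((b : ℝ) ^ (2 * j)) ^ 2 = ((b ^ 4) ^ j : ℕ) := by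
    push_cast
    ring
  refine ⟨Nat.log (b ^ 4) q, Real.le_sqrt_of_sq_le ?_, Real.sqrt_le_iff.2 ⟨by positivity, ?_⟩⟩
  · rw [hpow]
    exact_mod_cast Nat.pow_log_le_self (b ^ 4) hq
  · rw [hpow]
    exact_mod_cast (Nat.lt_pow_succ_log_self (Nat.one_lt_pow (by norm_num) hb) q).le

lemma rpow_logb_div_two_le_pow {b α q : ℝ} (hb : 1 < b) (hα : 1 ≤ α) (hq : 0 ≤ q) {m : ℕ}
    (h : √q ≤ b ^ m) : q ^ (Real.logb b α / 2) ≤ α ^ m :=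
  have hb0 : 0 < b := one_pos.trans hb
  calc q ^ (Real.logb b α / 2) = √q ^ Real.logb b α := by
        rw [Real.sqrt_eq_rpow, ← Real.rpow_mul hq, one_div_mul_eq_div]
    _ ≤ (b ^ m) ^ Real.logb b α :=
        Real.rpow_le_rpow (Real.sqrt_nonneg q) h (Real.logb_nonneg hb hα)
    _ = α ^ m := by
        rw [← Real.rpow_natCast, ← Real.rpow_mul hb0.le, mul_comm, Real.rpow_mul hb0.le,
          Real.rpow_logb hb0 hb.ne' (one_pos.trans_le hα), Real.rpow_natCast]

lemma le_mul_rpow_of_mul_pow_le {b α q N : ℝ} {k : ℕ} (hb : 1 < b) (hα : 1 ≤ α) (hq : 0 < q)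
    (hk : √q ≤ b ^ (2 * (k + 1))) (hN : N * α ^ (2 * k) ≤ 3 * q) :
    N ≤ 3 * α ^ 2 * q ^ (1 - Real.logb b α / 2) := by
  refine le_of_mul_le_mul_right (hN.trans ?_) (pow_pos (one_pos.trans_le hα) (2 * k))
  calc 3 * q = 3 * (q ^ (Real.logb b α / 2) * q ^ (1 - Real.logb b α / 2)) := by
        rw [← Real.rpow_add hq, add_sub_cancel, Real.rpow_one]
    _ ≤ 3 * (α ^ (2 * (k + 1)) * q ^ (1 - Real.logb b α / 2)) := by
        gcongr
        exact rpow_logb_div_two_le_pow hb hα hq.le hk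
    _ = 3 * α ^ 2 * q ^ (1 - Real.logb b α / 2) * α ^ (2 * k) := by ring

lemma rpow_one_fourth_le {d k : ℕ} (hd : 1 ≤ d) {q : ℝ} (hq : 0 ≤ q)
    (hk : √q ≤ (2 * d : ℝ) ^ (2 * (k + 1))) :
    q ^ (1 / 4 : ℝ) ≤ (2 * √(2 * d - 1)) ^ (2 * k) * (2 * d) := by
  have hd' : (1 : ℝ) ≤ d := by exact_mod_cast hd
  calc q ^ (1 / 4 : ℝ) = √(√q) := by
        rw [Real.sqrt_eq_rpow, Real.sqrt_eq_rpow, ← Real.rpow_mul hq]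
        norm_num
    _ ≤ √(((2 * d : ℝ) ^ (k + 1)) ^ 2) := by
        rw [← pow_mul']
        exact Real.sqrt_le_sqrt hk
    _ = (2 * d) ^ k * (2 * d) := by rw [Real.sqrt_sq (by positivity), pow_succ]
    _ ≤ (2 * √(2 * d - 1)) ^ (2 * k) * (2 * d) := by
        rw [pow_mul, mul_pow _ √_, Real.sq_sqrt (by linarith)]
        exact mul_le_mul_of_nonneg_right (pow_le_pow_left₀ (by positivity) (by linarith) k)
          (by positivity)

end Parameters

section Probability

lemma one_sub_le_card_subtype_div_card {Ω : Type*} [Fintype Ω] [Nonempty Ω] {P : Ω → Prop}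
    {B : Finset Ω} {δ : ℝ} (hP : ∀ ω ∉ B, P ω) (hB : #B ≤ δ * Fintype.card Ω) :
    1 - δ ≤ Nat.card {ω // P ω} / Nat.card Ω := by
  classical
  have hcompl : Fintype.card Ω - #B ≤ Nat.card {ω // P ω} := by
    rw [← Finset.card_compl, Nat.card_eq_fintype_card, Fintype.card_subtype]
    exact Finset.card_le_card fun ω hω => by simpa using hP ω (Finset.mem_compl.1 hω)
  have hcompl' : (Fintype.card Ω : ℝ) ≤ Nat.card {ω // P ω} + #B := by
    exact_mod_cast Nat.sub_le_iff_le_add.1 hcompl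
  have hΩ : (0 : ℝ) < Fintype.card Ω := by exact_mod_cast Fintype.card_pos (α := Ω)
  rw [Nat.card_eq_fintype_card (α := Ω), le_div_iff₀ hΩ]
  linarith

variable {F : Type*} [Field F] [Fintype F] {n d k : ℕ}
  {π : SL(2, F) →* Matrix.unitaryGroup (Fin n) ℂ}

lemma IsIrreducibleRep.excCount_le_rpow (hπ : IsIrreducibleRep π) (hd : 1 ≤ d)
    (hk : √(Fintype.card F) ≤ (2 * d : ℝ) ^ (2 * (k + 1))) {α : ℝ} (hα : 1 ≤ α)
    {S : Fin d → SL(2, F)} (hS : ‖nontrivialWordTrace π (2 * k) S‖ ≤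
      Fintype.card F * (2 * √(2 * d - 1)) ^ (2 * k)) :
    excCount (Amat π S) (α * (2 * √(2 * d - 1))) ≤
      3 * α ^ 2 * (Fintype.card F : ℝ) ^ (1 - Real.logb (2 * d) α / 2) := by
  have hd' : (1 : ℝ) ≤ d := by exact_mod_cast hd
  have hq : (0 : ℝ) < Fintype.card F := by exact_mod_cast Fintype.card_pos (α := F)
  have hn : (n : ℝ) ≤ 2 * Fintype.card F := by exact_mod_cast hπ.le_two_mul_card
  refine le_mul_rpow_of_mul_pow_le (by linarith) hα hq hk ?_
  refine (excCount_mul_pow_le hd π (even_two_mul k) (one_pos.le.trans hα) hS).trans ?_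
  linarith

variable [DecidableEq F]

lemma IsIrreducibleRep.card_filter_lt_norm_nontrivialWordTrace_mul_le
    (hπ : IsIrreducibleRep π) (hd : 1 ≤ d) (hk : (2 * d : ℝ) ^ (2 * k) ≤ √(Fintype.card F)) :
    #{S : Fin d → SL(2, F) | Fintype.card F * (2 * √(2 * d - 1)) ^ (2 * k) <
        ‖nontrivialWordTrace π (2 * k) S‖} * (2 * √(2 * d - 1)) ^ (2 * k) ≤
      (2 * (2 * d) ^ 2 + 4) * Fintype.card (Fin d → SL(2, F)) := by
  set q := Fintype.card F
  set K := Fintype.card (Fin d → SL(2, F))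
  set T : ℝ := (2 * √(2 * d - 1)) ^ (2 * k)
  have hq1 : (1 : ℝ) ≤ q := by exact_mod_cast Fintype.card_pos (α := F)
  have hr1 : 1 ≤ √(q : ℝ) := Real.one_le_sqrt.2 hq1
  have hr2 : √(q : ℝ) * √q = q := Real.mul_self_sqrt (by positivity)
  have hm : ((2 * k : ℕ) : ℝ) ≤ √q := by
    refine le_trans ?_ hk
    exact_mod_cast (Nat.lt_pow_self (by omega : 1 < 2 * d)).le
  have hweight : 2 * ((2 * d) ^ 2 + (2 * k : ℕ)) + √(2 * q) ≤ (2 * (2 * d) ^ 2 + 4) * √q := by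
    have hsqrt : √(2 * q : ℝ) ≤ 2 * √q := by
      rw [Real.sqrt_le_left (by positivity)]
      nlinarith
    have := le_mul_of_one_le_right (by positivity : (0 : ℝ) ≤ 2 * (2 * d) ^ 2) hr1
    linarith
  refine le_of_mul_le_mul_left ?_ (one_pos.trans_le hq1)
  calc (q : ℝ) * (#{S : Fin d → SL(2, F) | q * T < ‖nontrivialWordTrace π (2 * k) S‖} * T)
      = ∑ S : Fin d → SL(2, F) with q * T < ‖nontrivialWordTrace π (2 * k) S‖, q * T := by
        rw [Finset.sum_const, nsmul_eq_mul, mul_left_comm]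
    _ ≤ ∑ S : Fin d → SL(2, F) with q * T < ‖nontrivialWordTrace π (2 * k) S‖,
          ‖nontrivialWordTrace π (2 * k) S‖ :=
        Finset.sum_le_sum fun S hS => (Finset.mem_filter.1 hS).2.le
    _ ≤ ∑ S : Fin d → SL(2, F), ‖nontrivialWordTrace π (2 * k) S‖ :=
        Finset.sum_le_sum_of_subset_of_nonneg (Finset.filter_subset _ _) fun _ _ _ => norm_nonneg _
    _ ≤ (2 * d) ^ (2 * k) * (K * (2 * ((2 * d) ^ 2 + (2 * k : ℕ)) + √(2 * q))) :=
        hπ.sum_norm_nontrivialWordTrace_le (2 * k)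
    _ ≤ √q * (K * ((2 * (2 * d) ^ 2 + 4) * √q)) := by gcongr
    _ = √q * √q * ((2 * (2 * d) ^ 2 + 4) * K) := by ring
    _ = q * ((2 * (2 * d) ^ 2 + 4) * K) := by rw [hr2]

lemma IsIrreducibleRep.card_filter_lt_norm_nontrivialWordTrace_le
    (hπ : IsIrreducibleRep π) (hd : 1 ≤ d) (hk : (2 * d : ℝ) ^ (2 * k) ≤ √(Fintype.card F))
    (hk' : √(Fintype.card F) ≤ (2 * d : ℝ) ^ (2 * (k + 1))) :
    #{S : Fin d → SL(2, F) | Fintype.card F * (2 * √(2 * d - 1)) ^ (2 * k) <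
        ‖nontrivialWordTrace π (2 * k) S‖} ≤
      (2 * (2 * d) ^ 2 + 4) * (2 * d) * (Fintype.card F : ℝ) ^ (-(1 / 4 : ℝ)) *
        Fintype.card (Fin d → SL(2, F)) := by
  set N := #{S : Fin d → SL(2, F) | Fintype.card F * (2 * √(2 * d - 1)) ^ (2 * k) <
    ‖nontrivialWordTrace π (2 * k) S‖}
  set K := Fintype.card (Fin d → SL(2, F))
  have hq : (0 : ℝ) < Fintype.card F := by exact_mod_cast Fintype.card_pos (α := F)
  rw [Real.rpow_neg hq.le, ← div_eq_mul_inv, div_mul_eq_mul_div, le_div_iff₀ (by positivity)]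
  calc (N : ℝ) * (Fintype.card F : ℝ) ^ (1 / 4 : ℝ)
      ≤ N * ((2 * √(2 * d - 1)) ^ (2 * k) * (2 * d)) := by
        gcongr
        exact rpow_one_fourth_le hd hq.le hk'
    _ = N * (2 * √(2 * d - 1)) ^ (2 * k) * (2 * d) := (mul_assoc _ _ _).symm
    _ ≤ (2 * (2 * d) ^ 2 + 4) * K * (2 * d) :=
        mul_le_mul_of_nonneg_right (hπ.card_filter_lt_norm_nontrivialWordTrace_mul_le hd hk)
          (by positivity)
    _ = (2 * (2 * d) ^ 2 + 4) * (2 * d) * K := mul_right_comm _ _ _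

end Probability

end

theorem stmt1_general (d : ℕ) (hd : 1 ≤ d) (α : ℝ) (hα : 1 ≤ α) (ε : ℝ) (hε : 0 ≤ ε) :
    ∃ C c : ℝ, 0 < C ∧ 0 < c ∧
      ∀ (F : Type*) [Field F] [Fintype F]
        (n : ℕ) (π : Matrix.SpecialLinearGroup (Fin 2) F →* Matrix.unitaryGroup (Fin n) ℂ),
          IsIrreducibleRep π →
          (1 - c * (Fintype.card F : ℝ) ^ (-(1 / 4 : ℝ))) ≤
            (Nat.card {S : Fin d → Matrix.SpecialLinearGroup (Fin 2) F //
                (excCount (Amat π S) (α * (2 * Real.sqrt (2 * d - 1))) : ℝ) ≤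
                  C * (Fintype.card F : ℝ) ^ (1 - (Real.logb (2 * d) α - ε) / 2)} : ℝ) /
              (Nat.card (Fin d → Matrix.SpecialLinearGroup (Fin 2) F) : ℝ) := by
  refine ⟨3 * α ^ 2, (2 * (2 * d) ^ 2 + 4) * (2 * d), by positivity, by positivity, ?_⟩
  intro F _ _ n π hπ
  classical
  have hq : (1 : ℝ) ≤ Fintype.card F := by exact_mod_cast Fintype.card_pos (α := F)
  obtain ⟨k, hk, hk'⟩ :=
    exists_pow_le_sqrt_le_pow (b := 2 * d) (by omega) (Fintype.card_ne_zero (α := F))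
  push_cast at hk hk'
  refine one_sub_le_card_subtype_div_card (fun S hS => ?_)
    (hπ.card_filter_lt_norm_nontrivialWordTrace_le hd hk hk')
  refine (hπ.excCount_le_rpow hd hk' hα (by simpa using hS)).trans ?_
  gcongr
  linarith

/-- Fix d ≥ 2, α > 1, ε > 0. There exist C, c > 0 such that for every prime p and
every nontrivial irreducible unitary representation π of SL₂(ℤ/pℤ), with probability at least
1 − c·p^{−1/4} over a uniform S ∈ SL₂(ℤ/pℤ)^d, the number of eigenvalues λ of A_{π,S} with
|λ| > α·2√(2d−1) is at most C·p^{1 − (log_{2d}(α) − ε)/2}. -/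
theorem stmt1 (d : ℕ) (hd : 2 ≤ d) (α : ℝ) (hα : 1 < α) (ε : ℝ) (hε : 0 < ε) :
    ∃ C c : ℝ, 0 < C ∧ 0 < c ∧
      ∀ (p : ℕ), p.Prime →
        ∀ (n : ℕ) (π : SL 2 p →* Matrix.unitaryGroup (Fin n) ℂ),
          IsIrreducibleRep π → (∃ g, π g ≠ 1) →
          (1 - c * (p : ℝ) ^ (-(1/4 : ℝ))) ≤
            (Nat.card {S : Fin d → SL 2 p //
                (excCount (Amat π S) (α * (2 * Real.sqrt (2 * d - 1))) : ℝ) ≤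
                  C * (p : ℝ) ^ (1 - (Real.logb (2 * d) α - ε) / 2)} : ℝ) /
              (Nat.card (Fin d → SL 2 p) : ℝ) := by
  obtain ⟨C, c, hC, hc, h⟩ := stmt1_general d (by omega) α hα.le ε hε.le
  refine ⟨C, c, hC, hc, fun p hp n π hπ _ => ?_⟩
  have := Fact.mk hp
  simpa only [ZMod.card] using h (ZMod p) n π hπ
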